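/- arXiv:1809.03832 — 3 statements merged into one kernel-verified Lean document; each statement's English description precedes it below -/
import Mathlib

section
/- Let g : ℝ^d → ℝ be three times continuously differentiable, let θ₀ ∈ ℝ^d, and let θ : ℝ → ℝ^d satisfy θ(0) = θ₀ and θ'(t) = −∇g(θ(t)) for all t in a neighbourhood of 0. Define the two-half-step approximation θ_{1/2}(η) = θ₀ − (η/2)∇g(θ₀) and θ̂₁(η) = θ_{1/2}(η) − (η/2)∇g(θ_{1/2}(η)). Then, as η → 0, θ(η) − θ̂₁(η) = (η²/4)·(D(∇g)(θ₀))(∇g(θ₀)) + O(η³). -/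
open Asymptotics Filter

/-!
Integrating the ODE `y' = v(y)` twice from `y(0) = y₀` gives
`y(η) = y₀ + η v(y₀) + (η²/2) Dv(y₀) v(y₀) + O(η³)`, while the two Euler steps of size `η/2` give
`y₀ + η v(y₀) + (η²/4) Dv(y₀) v(y₀) + O(η³)`: the second-order term only arises from the second
step, which evaluates `v` at `y₀ + (η/2) v(y₀)`.
For `v = -∇g` the two signs in `Dv(y₀) v(y₀)` cancel.
-/

open scoped Topology

section Calculus

variable {E F : Type*} [NormedAddCommGroup E] [NormedSpace ℝ E]
  [NormedAddCommGroup F] [NormedSpace ℝ F]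

theorem sub_isBigO_sub_pow_succ_of_hasDerivAt {f f' : ℝ → F} {a : ℝ} {n : ℕ}
    (hf : ∀ᶠ t in 𝓝 a, HasDerivAt f (f' t) t) (hf' : f' =O[𝓝 a] fun t => (t - a) ^ n) :
    (fun t => f t - f a) =O[𝓝 a] fun t => (t - a) ^ (n + 1) := by
  have hfderiv : fderiv ℝ f =O[𝓝 a] fun t => ‖t - a‖ ^ (n : ℝ) := by
    refine IsBigO.trans (.of_bound' ?_) (hf'.trans (.of_bound' ?_))
    · filter_upwards [hf] with t ht
      rw [← norm_deriv_eq_norm_fderiv, ht.deriv]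
    · exact .of_forall fun t => by simp
  have hsub := sub_isBigO_norm_rpow_add_one_of_fderiv n.cast_nonneg
    (hf.mono fun t ht => ht.differentiableAt) hfderiv
  refine hsub.trans (.of_bound' (.of_forall fun t => ?_))
  rw [← Nat.cast_succ, Real.rpow_natCast, norm_pow, norm_norm, norm_pow]

theorem sub_sub_fderiv_isBigO_norm_sq {f : E → F} {a : E} (hf : ContDiffAt ℝ 2 f a) :
    (fun x => f x - f a - fderiv ℝ f a (x - a)) =O[𝓝 a] fun x => ‖x - a‖ ^ 2 := by
  have hdiff : ∀ᶠ x in 𝓝 a, DifferentiableAt ℝ f x :=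
    (hf.eventually (by simp)).mono fun x hx => hx.differentiableAt (by simp)
  have hremainder : ∀ᶠ x in 𝓝 a, HasFDerivAt (fun x => f x - f a - fderiv ℝ f a (x - a))
      (fderiv ℝ f x - fderiv ℝ f a) x :=
    hdiff.mono fun x hx => (hx.hasFDerivAt.sub_const _).sub <|
      (fderiv ℝ f a).hasFDerivAt.comp x ((hasFDerivAt_id x).sub_const a)
  have hfderiv : (fun x => fderiv ℝ f x - fderiv ℝ f a) =O[𝓝 a] fun x => ‖x - a‖ :=
    ((hf.fderiv_right (m := 1) (by norm_num)).differentiableAt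
      (by simp)).hasFDerivAt.isBigO_sub.norm_right
  have hbound := isBigO_norm_rpow_add_one_of_fderiv_of_apply_eq_zero zero_le_one
    (hremainder.mono fun x hx => hx.differentiableAt)
    (hfderiv.congr' (hremainder.mono fun x hx => hx.fderiv.symm) (by simp)) (by simp)
  exact hbound.congr_right fun x => by rw [one_add_one_eq_two, Real.rpow_two]

theorem comp_sub_sub_smul_fderiv_isBigO_sq {α : Type*} {l : Filter α} {f : E → F} {a w : E}
    {γ : α → E} {ε : α → ℝ} (hf : ContDiffAt ℝ 2 f a) (hε : Tendsto ε l (𝓝 0))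
    (hγ : (fun t => γ t - a - ε t • w) =O[l] fun t => ε t ^ 2) :
    (fun t => f (γ t) - f a - ε t • fderiv ℝ f a w) =O[l] fun t => ε t ^ 2 := by
  have hsq : (fun t => ε t ^ 2) =O[l] ε := by
    simpa [sq] using (hε.isBigO_one ℝ).mul (isBigO_refl ε l)
  have hγ_sub : (fun t => γ t - a) =O[l] ε := by
    have hlinear : (fun t => ε t • w) =O[l] ε := by
      simpa using (isBigO_refl ε l).smul (isBigO_const_const w (one_ne_zero' ℝ) l)
    simpa using (hγ.trans hsq).add hlinear
  have hγ_tendsto : Tendsto γ l (𝓝 a) := tendsto_sub_nhds_zero_iff.1 (hγ_sub.trans_tendsto hε)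
  have htaylor := ((sub_sub_fderiv_isBigO_norm_sq hf).comp_tendsto hγ_tendsto).trans
    (hγ_sub.norm_left.pow 2)
  refine (htaylor.add (((fderiv ℝ f a).isBigO_comp _ l).trans hγ)).congr_left fun t => ?_
  simp only [Function.comp_apply, map_sub, map_smul]
  abel

theorem contDiffAt_gradient {H : Type*} [NormedAddCommGroup H] [InnerProductSpace ℝ H]
    [CompleteSpace H] {g : H → ℝ} {x : H} {m n : WithTop ℕ∞} (hg : ContDiffAt ℝ n g x)
    (hmn : m + 1 ≤ n) : ContDiffAt ℝ m (gradient g) x :=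
  (InnerProductSpace.toDual ℝ H).symm.contDiff.contDiffAt.comp x (hg.fderiv_right hmn)

end Calculus

/-- One step of size `h` of the explicit Euler method for the autonomous equation `y' = v(y)`,
started at `x`. -/
def eulerStep {E : Type*} [AddCommGroup E] [Module ℝ E] (v : E → E) (h : ℝ) (x : E) : E :=
  x + h • v x

section VectorField

variable {E : Type*} [NormedAddCommGroup E] [NormedSpace ℝ E] {v : E → E} {y : ℝ → E} {t₀ : ℝ}

theorem solution_sub_eulerStep_isBigO_sq (hv : DifferentiableAt ℝ v (y t₀))
    (hy : ∀ᶠ t in 𝓝 t₀, HasDerivAt y (v (y t)) t) :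
    (fun t => y t - eulerStep v (t - t₀) (y t₀)) =O[𝓝 t₀] fun t => (t - t₀) ^ 2 := by
  have hvelocity : (fun t => v (y t) - v (y t₀)) =O[𝓝 t₀] fun t => (t - t₀) ^ 1 := by
    simpa using (hv.hasFDerivAt.comp_hasDerivAt t₀ hy.self_of_nhds).isBigO_sub
  have hderiv : ∀ᶠ t in 𝓝 t₀,
      HasDerivAt (fun t => y t - eulerStep v (t - t₀) (y t₀)) (v (y t) - v (y t₀)) t := by
    filter_upwards [hy] with t ht
    simpa using! ht.sub ((((hasDerivAt_id t).sub_const t₀).smul_const (v (y t₀))).const_add (y t₀))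
  simpa [eulerStep] using sub_isBigO_sub_pow_succ_of_hasDerivAt hderiv hvelocity

theorem solution_sub_eulerStep_sub_isBigO_cube (hv : ContDiffAt ℝ 2 v (y t₀))
    (hy : ∀ᶠ t in 𝓝 t₀, HasDerivAt y (v (y t)) t) :
    (fun t => y t - eulerStep v (t - t₀) (y t₀)
        - ((t - t₀) ^ 2 / 2) • fderiv ℝ v (y t₀) (v (y t₀)))
      =O[𝓝 t₀] fun t => (t - t₀) ^ 3 := by
  have hvelocity : (fun t => v (y t) - v (y t₀) - (t - t₀) • fderiv ℝ v (y t₀) (v (y t₀)))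
      =O[𝓝 t₀] fun t => (t - t₀) ^ 2 := by
    refine comp_sub_sub_smul_fderiv_isBigO_sq hv (tendsto_sub_nhds_zero_iff.2 tendsto_id) ?_
    simpa only [eulerStep, sub_add_eq_sub_sub] using
      solution_sub_eulerStep_isBigO_sq (hv.differentiableAt (by simp)) hy
  have hderiv : ∀ᶠ t in 𝓝 t₀,
      HasDerivAt (fun t => y t - eulerStep v (t - t₀) (y t₀)
          - ((t - t₀) ^ 2 / 2) • fderiv ℝ v (y t₀) (v (y t₀)))
        (v (y t) - v (y t₀) - (t - t₀) • fderiv ℝ v (y t₀) (v (y t₀))) t := by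
    filter_upwards [hy] with t ht
    have hshift : HasDerivAt (fun t => t - t₀) 1 t := (hasDerivAt_id t).sub_const t₀
    have hstep := (hshift.smul_const (v (y t₀))).const_add (y t₀)
    have hquadratic := ((hshift.pow 2).div_const 2).smul_const (fderiv ℝ v (y t₀) (v (y t₀)))
    simpa using! (ht.sub hstep).sub hquadratic
  simpa [eulerStep] using sub_isBigO_sub_pow_succ_of_hasDerivAt hderiv hvelocity

theorem eulerStep_eulerStep_sub_isBigO_cube {x : E} (hv : ContDiffAt ℝ 2 v x) :
    (fun h => eulerStep v h (eulerStep v h x) - eulerStep v (2 * h) x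
        - h ^ 2 • fderiv ℝ v x (v x))
      =O[𝓝 0] fun h => h ^ 3 := by
  have hslope : (fun h => v (eulerStep v h x) - v x - h • fderiv ℝ v x (v x))
      =O[𝓝 0] fun h => h ^ 2 :=
    comp_sub_sub_smul_fderiv_isBigO_sq hv tendsto_id (by simpa [eulerStep] using isBigO_zero _ _)
  refine ((isBigO_refl (fun h : ℝ => h) (𝓝 0)).smul hslope).congr (fun h => ?_) fun h => ?_
  · simp only [eulerStep]
    module
  · rw [smul_eq_mul, ← pow_succ']

theorem two_half_steps_local_error_general (hv : ContDiffAt ℝ 2 v (y t₀))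
    (hy : ∀ᶠ t in 𝓝 t₀, HasDerivAt y (v (y t)) t) :
    (fun η => y (t₀ + η) - eulerStep v (η / 2) (eulerStep v (η / 2) (y t₀))
        - (η ^ 2 / 4) • fderiv ℝ v (y t₀) (v (y t₀)))
      =O[𝓝 0] fun η => η ^ 3 := by
  have hshift : Tendsto (fun η => t₀ + η) (𝓝 0) (𝓝 t₀) := by
    simpa using (continuous_const_add t₀).tendsto 0
  have hhalf : Tendsto (fun η : ℝ => η / 2) (𝓝 0) (𝓝 0) := by
    simpa using (continuous_id.div_const (2 : ℝ)).tendsto 0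
  have hhalf_cube : (fun η : ℝ => (η / 2) ^ 3) =O[𝓝 0] fun η => η ^ 3 := by
    simpa only [div_eq_inv_mul] using ((isBigO_refl _ _).const_mul_left (2⁻¹ : ℝ)).pow 3
  have hsolution := (solution_sub_eulerStep_sub_isBigO_cube hv hy).comp_tendsto hshift
  have hsteps := ((eulerStep_eulerStep_sub_isBigO_cube hv).comp_tendsto hhalf).trans hhalf_cube
  simp only [Function.comp_def, add_sub_cancel_left] at hsolution
  refine (hsolution.sub hsteps).congr_left fun η => ?_
  simp only [Function.comp_apply, mul_div_cancel₀ η (two_ne_zero' ℝ)]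
  module

end VectorField

/-- The local error of two explicit Euler half-steps of size `η/2` for the gradient flow
`θ' = -∇g(θ)` satisfies `θ(η) - θ̂₁(η) = (η²/4)·D(∇g)(θ₀)(∇g(θ₀)) + O(η³)` as `η → 0`. -/
theorem two_half_steps_local_error {d : ℕ} (g : EuclideanSpace ℝ (Fin d) → ℝ)
    (hg : ContDiff ℝ 3 g) (θ₀ : EuclideanSpace ℝ (Fin d))
    (θ : ℝ → EuclideanSpace ℝ (Fin d)) (hθ0 : θ 0 = θ₀)
    (hθ : ∀ᶠ t in nhds (0 : ℝ), HasDerivAt θ (-(gradient g (θ t))) t) :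
    (fun η : ℝ => θ η -
        ((θ₀ - (η / 2) • gradient g θ₀)
          - (η / 2) • gradient g (θ₀ - (η / 2) • gradient g θ₀))
        - (η ^ 2 / 4) • (fderiv ℝ (gradient g) θ₀ (gradient g θ₀)))
      =O[nhds 0] fun η : ℝ => η ^ 3 := by
  have hgrad : ContDiffAt ℝ 2 (gradient g) (θ 0) :=
    contDiffAt_gradient hg.contDiffAt (by norm_num)
  simpa [eulerStep, ← sub_eq_add_neg, hθ0] using two_half_steps_local_error_general hgrad.neg hθ
end

section
/- Let μ and ν be probability measures on a measurable space Ω with μ absolutely continuous with respect to ν, and let λ > 0 and ε > 0. Set α = log ∫ (dμ/dν)^λ dμ, and assume this integral is finite. Then for every measurable set E ⊆ Ω, μ(E) ≤ e^ε · ν(E) + exp(α − λ·ε). -/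
open MeasureTheory Real

/-!
Put `t = e^ε`. Where `dμ/dν ≤ t`, the measure `μ` is dominated by `t • ν`, which accounts for the
term `e^ε ν(E)`. On the remaining set, Markov's inequality for `(dμ/dν)^λ` under `μ` bounds the
`μ`-mass by `t^(-λ) ∫ (dμ/dν)^λ dμ = exp (α - λε)`.
-/

section

open scoped ENNReal

variable {Ω : Type*} [MeasurableSpace Ω] {μ ν : Measure Ω}

theorem restrict_withDensity_setOf_le_le_smul {f : Ω → ℝ≥0∞} (hf : Measurable f) (t : ℝ≥0∞) :
    (ν.withDensity f).restrict {x | f x ≤ t} ≤ t • ν := by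
  have hS : MeasurableSet {x | f x ≤ t} := measurableSet_le hf measurable_const
  calc (ν.withDensity f).restrict {x | f x ≤ t}
      = (ν.restrict {x | f x ≤ t}).withDensity f := restrict_withDensity hS f
    _ ≤ (ν.restrict {x | f x ≤ t}).withDensity fun _ => t :=
        withDensity_mono (ae_restrict_mem hS)
    _ = t • ν.restrict {x | f x ≤ t} := withDensity_const t
    _ ≤ t • ν := by gcongr; exact Measure.restrict_le_self

theorem withDensity_apply_le_mul_add_withDensity_lt {f : Ω → ℝ≥0∞} (hf : Measurable f)
    (t : ℝ≥0∞) (E : Set Ω) :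
    ν.withDensity f E ≤ t * ν E + ν.withDensity f {x | t < f x} := by
  have hS : MeasurableSet {x | f x ≤ t} := measurableSet_le hf measurable_const
  calc ν.withDensity f E
      = ν.withDensity f (E ∩ {x | f x ≤ t}) + ν.withDensity f (E \ {x | f x ≤ t}) :=
        (measure_inter_add_sdiff E hS).symm
    _ ≤ t * ν E + ν.withDensity f {x | t < f x} := by
        gcongr ?_ + ν.withDensity f ?_
        · rw [← Measure.restrict_apply' hS]
          exact restrict_withDensity_setOf_le_le_smul hf t E
        · exact fun x hx => by simpa using hx.2

theorem measure_ge_le_lintegral_rpow_div {f : Ω → ℝ≥0∞} (hf : AEMeasurable f μ) {t : ℝ≥0∞}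
    (ht₀ : t ≠ 0) (ht : t ≠ ∞) {p : ℝ} (hp : 0 ≤ p) :
    μ {x | t ≤ f x} ≤ (∫⁻ x, f x ^ p ∂μ) / t ^ p :=
  calc μ {x | t ≤ f x}
      ≤ μ {x | t ^ p ≤ f x ^ p} := measure_mono fun _ hx => ENNReal.rpow_le_rpow hx hp
    _ ≤ (∫⁻ x, f x ^ p ∂μ) / t ^ p :=
        meas_ge_le_lintegral_div (hf.pow_const p) (ENNReal.rpow_pos ht₀.pos ht).ne'
          (ENNReal.rpow_ne_top_of_nonneg hp ht)

theorem measure_le_mul_add_lintegral_rnDeriv_rpow_div [μ.HaveLebesgueDecomposition ν]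
    (hac : μ ≪ ν) {t : ℝ≥0∞} (ht₀ : t ≠ 0) (ht : t ≠ ∞) {p : ℝ} (hp : 0 ≤ p) (E : Set Ω) :
    μ E ≤ t * ν E + (∫⁻ x, μ.rnDeriv ν x ^ p ∂μ) / t ^ p := by
  have hf : Measurable (μ.rnDeriv ν) := Measure.measurable_rnDeriv μ ν
  calc μ E
      ≤ t * ν E + μ {x | t < μ.rnDeriv ν x} := by
        simpa only [Measure.withDensity_rnDeriv_eq μ ν hac] using
          withDensity_apply_le_mul_add_withDensity_lt (ν := ν) hf t E
    _ ≤ t * ν E + μ {x | t ≤ μ.rnDeriv ν x} := by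
        gcongr with x
        exact le_of_lt
    _ ≤ t * ν E + (∫⁻ x, μ.rnDeriv ν x ^ p ∂μ) / t ^ p := by
        gcongr
        exact measure_ge_le_lintegral_rpow_div hf.aemeasurable ht₀ ht hp

theorem lintegral_rpow_eq_ofReal_integral_toReal_rpow {f : Ω → ℝ≥0∞} (hf : ∀ᵐ x ∂μ, f x ≠ ∞)
    {p : ℝ} (hp : 0 ≤ p) (hint : Integrable (fun x => (f x).toReal ^ p) μ) :
    ∫⁻ x, f x ^ p ∂μ = ENNReal.ofReal (∫ x, (f x).toReal ^ p ∂μ) := by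
  rw [ofReal_integral_eq_lintegral_ofReal hint (ae_of_all _ fun x => by positivity)]
  refine lintegral_congr_ae ?_
  filter_upwards [hf] with x hx
  rw [← ENNReal.ofReal_rpow_of_nonneg ENNReal.toReal_nonneg hp, ENNReal.ofReal_toReal hx]

theorem dp_from_moment_bound_general [SigmaFinite μ] [μ.HaveLebesgueDecomposition ν]
    (hac : μ ≪ ν) {lam : ℝ} (hlam : 0 ≤ lam) (ε : ℝ)
    (hint : Integrable (fun o => (μ.rnDeriv ν o).toReal ^ lam) μ) {E : Set Ω} (hE : ν E ≠ ∞) :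
    μ.real E ≤ exp ε * ν.real E +
      exp (log (∫ o, (μ.rnDeriv ν o).toReal ^ lam ∂μ) - lam * ε) := by
  set I := ∫ o, (μ.rnDeriv ν o).toReal ^ lam ∂μ
  have hI : ∫⁻ o, μ.rnDeriv ν o ^ lam ∂μ = ENNReal.ofReal I :=
    lintegral_rpow_eq_ofReal_integral_toReal_rpow (hac.ae_le (Measure.rnDeriv_ne_top μ ν))
      hlam hint
  have hI₀ : 0 ≤ I := integral_nonneg fun o => by positivity
  have hbound : μ E ≤ ENNReal.ofReal (exp ε * ν.real E + I / exp ε ^ lam) := by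
    rw [ENNReal.ofReal_add (by positivity) (div_nonneg hI₀ (by positivity)),
      ENNReal.ofReal_mul (exp_nonneg ε), ofReal_measureReal hE,
      ENNReal.ofReal_div_of_pos (by positivity), ← hI, ← ENNReal.ofReal_rpow_of_pos (exp_pos ε)]
    exact measure_le_mul_add_lintegral_rnDeriv_rpow_div hac
      (ENNReal.ofReal_pos.mpr (exp_pos ε)).ne' ENNReal.ofReal_ne_top hlam E
  -- `exp (log I) = 1` when `I = 0`, so `I ≤ exp (log I)` is not an equality in general.
  calc μ.real E
      ≤ exp ε * ν.real E + I / exp ε ^ lam :=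
        ENNReal.toReal_le_of_le_ofReal (by positivity) hbound
    _ ≤ exp ε * ν.real E + exp (log I) / exp ε ^ lam := by gcongr; exact le_exp_log I
    _ = exp ε * ν.real E + exp (log I - lam * ε) := by rw [exp_sub, mul_comm lam, exp_mul]

end

/-- Tail bound from the moments accountant: if `α = log ∫ (dμ/dν)^λ dμ`, then for every
measurable set `E`, `μ(E) ≤ e^ε ν(E) + exp(α - λε)`. -/
theorem dp_from_moment_bound {Ω : Type*} [MeasurableSpace Ω]
    (μ ν : Measure Ω) [IsProbabilityMeasure μ] [IsProbabilityMeasure ν]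
    (hac : μ ≪ ν) (lam ε : ℝ) (hlam : 0 < lam) (hε : 0 < ε)
    (hint : Integrable (fun o => (μ.rnDeriv ν o).toReal ^ lam) μ) :
    ∀ E : Set Ω, MeasurableSet E →
      (μ E).toReal ≤ Real.exp ε * (ν E).toReal +
        Real.exp (Real.log (∫ o, (μ.rnDeriv ν o).toReal ^ lam ∂μ) - lam * ε) :=
  fun E _ => dp_from_moment_bound_general hac hlam.le ε hint (measure_ne_top ν E)
end

section
/- Let m, m' ∈ ℝ, σ > 0, and λ ≥ 0. Let μ be the Gaussian measure on ℝ with mean m and variance σ², and let ν be the Gaussian measure on ℝ with mean m' and variance σ². Then ∫ (dμ/dν)^λ dμ = exp(λ(λ+1)(m − m')² / (2σ²)); equivalently, the λ-th privacy-loss moment of μ against ν equals λ(λ+1)(m − m')²/(2σ²). -/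
open MeasureTheory ProbabilityTheory Real
open scoped NNReal

/-!
Gaussian measures of equal variance `v ≠ 0` are exponential tilts of one another: `𝒩(m, v)` is
`𝒩(m', v)` tilted by `x ↦ t * x` with `t = (m - m') / v`. For a tilt of `ν` by `f`, the integrand
contributes `lam` factors `exp f / ∫ exp f ∂ν` and the change of measure one more, so the moment is
`(∫ exp ((lam + 1) * f) ∂ν) / (∫ exp f ∂ν) ^ (lam + 1)`. In the Gaussian case both integrals are
values of the moment generating function of `𝒩(m', v)`.
-/

theorem integral_toReal_rnDeriv_tilted_rpow {α : Type*} {mα : MeasurableSpace α} {ν : Measure α}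
    [SigmaFinite ν] {f : α → ℝ} (hf : Integrable (fun x ↦ exp (f x)) ν) (lam : ℝ) :
    ∫ x, ((ν.tilted f).rnDeriv ν x).toReal ^ lam ∂(ν.tilted f) =
      (∫ x, exp ((lam + 1) * f x) ∂ν) / (∫ x, exp (f x) ∂ν) ^ (lam + 1) := by
  rcases eq_zero_or_neZero ν with rfl | _
  · simp
  have hf_meas : AEMeasurable f ν := aemeasurable_of_aemeasurable_exp hf.aemeasurable
  have hZ : 0 < ∫ x, exp (f x) ∂ν := integral_exp_pos hf
  rw [integral_tilted, ← integral_div]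
  refine integral_congr_ae ?_
  filter_upwards [rnDeriv_tilted_left_self hf_meas] with x hx
  set Z := ∫ y, exp (f y) ∂ν
  have hdensity : 0 < exp (f x) / Z := div_pos (exp_pos _) hZ
  calc (exp (f x) / Z) • ((ν.tilted f).rnDeriv ν x).toReal ^ lam
      = (exp (f x) / Z) ^ (lam + 1) := by
        rw [hx, ENNReal.toReal_ofReal hdensity.le, smul_eq_mul, mul_comm,
          rpow_add_one hdensity.ne']
    _ = exp ((lam + 1) * f x) / Z ^ (lam + 1) := by
        rw [div_rpow (exp_pos _).le hZ.le, ← exp_mul, mul_comm (f x)]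

theorem mgf_id_gaussianReal_tilted_mul (m : ℝ) (v : ℝ≥0) (t : ℝ) :
    mgf id ((gaussianReal m v).tilted (t * ·)) = mgf id (gaussianReal (m + v * t) v) := by
  ext s
  calc mgf id ((gaussianReal m v).tilted (t * ·)) s
      = mgf id (gaussianReal m v) (t + s) / mgf id (gaussianReal m v) t := by
        simp only [mgf, id_eq, integral_exp_tilted, Pi.add_apply, add_mul]
    _ = mgf id (gaussianReal (m + v * t) v) s := by
        simp only [mgf_id_gaussianReal, ← exp_sub]
        ring_nf

theorem gaussianReal_tilted_mul (m : ℝ) (v : ℝ≥0) (t : ℝ) :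
    (gaussianReal m v).tilted (t * ·) = gaussianReal (m + v * t) v := by
  have : IsProbabilityMeasure ((gaussianReal m v).tilted (t * ·)) :=
    isProbabilityMeasure_tilted (integrable_exp_mul_gaussianReal t)
  refine Measure.ext_of_complexMGF_id_eq (funext fun z ↦ ?_)
  exact (eqOn_complexMGF_of_mgf (mgf_id_gaussianReal_tilted_mul m v t).symm (by simp)).symm

theorem integral_toReal_rnDeriv_gaussianReal_add_mul_rpow (m : ℝ) (v : ℝ≥0) (t lam : ℝ) :
    ∫ x, ((gaussianReal (m + v * t) v).rnDeriv (gaussianReal m v) x).toReal ^ lam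
        ∂(gaussianReal (m + v * t) v)
      = exp (lam * (lam + 1) * (v * t ^ 2) / 2) := by
  have hmgf (s : ℝ) : ∫ x, exp (s * x) ∂(gaussianReal m v) = exp (m * s + v * s ^ 2 / 2) :=
    congrFun mgf_id_gaussianReal s
  rw [← gaussianReal_tilted_mul,
    integral_toReal_rnDeriv_tilted_rpow (integrable_exp_mul_gaussianReal t)]
  simp only [← mul_assoc, hmgf, ← exp_mul, ← exp_sub]
  ring_nf

theorem gaussian_privacy_loss_moment_general (m m' : ℝ) {v : ℝ≥0} (hv : v ≠ 0) (lam : ℝ) :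
    ∫ x, ((gaussianReal m v).rnDeriv (gaussianReal m' v) x).toReal ^ lam ∂(gaussianReal m v)
      = exp (lam * (lam + 1) * (m - m') ^ 2 / (2 * v)) := by
  have hv' : (v : ℝ) ≠ 0 := NNReal.coe_ne_zero.mpr hv
  have hshift : m' + v * ((m - m') / v) = m := by field_simp; ring
  have hmoment := integral_toReal_rnDeriv_gaussianReal_add_mul_rpow m' v ((m - m') / v) lam
  rw [hshift] at hmoment
  rw [hmoment]
  congr 1
  field_simp

/-- The λ-th privacy-loss moment of a Gaussian with mean `m` and variance `σ²` against a
Gaussian with mean `m'` and variance `σ²`: `∫ (dμ/dν)^λ dμ = exp(λ(λ+1)(m-m')²/(2σ²))`. -/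
theorem gaussian_privacy_loss_moment (m m' σ : ℝ) (hσ : 0 < σ) (lam : ℝ) (hlam : 0 ≤ lam) :
    ∫ x, ((gaussianReal m ⟨σ ^ 2, sq_nonneg σ⟩).rnDeriv
          (gaussianReal m' ⟨σ ^ 2, sq_nonneg σ⟩) x).toReal ^ lam
        ∂(gaussianReal m ⟨σ ^ 2, sq_nonneg σ⟩)
      = Real.exp (lam * (lam + 1) * (m - m') ^ 2 / (2 * σ ^ 2)) :=
  gaussian_privacy_loss_moment_general m m'
    (NNReal.coe_ne_zero.mp (pow_pos hσ 2).ne' : (⟨σ ^ 2, sq_nonneg σ⟩ : ℝ≥0) ≠ 0) lam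
end
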